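/- Let n ≥ 2 and let W ∈ ℝ^{n×n} be doubly stochastic. Define λ := max{ ‖Wᵀx‖₂² : x ∈ ℝⁿ, ‖x‖₂ = 1, Σ_i x_i = 0 }. Then for every real d×n matrix X one has ‖X(W − Π)‖_F² ≤ λ·‖X(I − Π)‖_F². -/

import Mathlib

/-!
Column sums equal to `1` give `Π W = Π`, so `X (W - Π) = X (I - Π) W`. The rows of `X (I - Π)` have
coordinate sum zero, and on such a row `y` homogeneity gives `‖Wᵀ y‖² ≤ λ ‖y‖²`
(`sum_sq_le_lambda_mul`); summing over the rows yields the claim. The supremum defining `λ` is over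
a set bounded above by `‖W‖_F²`, by Cauchy–Schwarz.
-/

open Matrix BigOperators Finset

/-- Squared Frobenius norm of a real matrix. -/
noncomputable def frobSq {m n : ℕ} (M : Matrix (Fin m) (Fin n) ℝ) : ℝ :=
  ∑ i, ∑ j, (M i j) ^ 2

/-- The n×n averaging matrix Π with all entries 1/n. -/
noncomputable def avgMat (n : ℕ) : Matrix (Fin n) (Fin n) ℝ :=
  Matrix.of fun _ _ => (1 : ℝ) / n

/-- The values of `‖Wᵀ x‖²` at unit vectors with zero sum are bounded, so that their `sSup` is a
genuine supremum. -/
lemma bddAbove_rayleigh (n : ℕ) (W : Matrix (Fin n) (Fin n) ℝ) :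
    BddAbove {r : ℝ | ∃ x : Fin n → ℝ,
          (∑ i, (x i) ^ 2 = 1) ∧ (∑ i, x i = 0) ∧
          r = ∑ i, (∑ j, W j i * x j) ^ 2} := by
  refine ⟨∑ i, ∑ j, (W j i) ^ 2, ?_⟩
  rintro r ⟨x, hx, -, rfl⟩
  refine Finset.sum_le_sum fun i _ => ?_
  have h := Finset.sum_mul_sq_le_sq_mul_sq Finset.univ (fun j => W j i) x
  rwa [hx, mul_one] at h

lemma sum_sq_le_lambda_mul (n : ℕ) (W : Matrix (Fin n) (Fin n) ℝ) (y : Fin n → ℝ)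
    (hy : ∑ i, y i = 0) :
    ∑ i, (∑ j, W j i * y j) ^ 2 ≤
      (sSup {r : ℝ | ∃ x : Fin n → ℝ,
          (∑ i, (x i) ^ 2 = 1) ∧ (∑ i, x i = 0) ∧
          r = ∑ i, (∑ j, W j i * x j) ^ 2}) * ∑ i, (y i) ^ 2 := by
  have hs0 : 0 ≤ ∑ i, (y i) ^ 2 := Finset.sum_nonneg fun i _ => sq_nonneg _
  rcases hs0.eq_or_lt with h0 | hpos
  · have hz : ∀ i, y i = 0 := fun i => by
      have := (Finset.sum_eq_zero_iff_of_nonneg (fun i _ => sq_nonneg (y i))).1 h0.symm i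
        (Finset.mem_univ i)
      exact pow_eq_zero_iff (two_ne_zero) |>.1 this
    simp [hz]
  · set s := ∑ i, (y i) ^ 2 with hs
    have hsq : (Real.sqrt s)⁻¹ ^ 2 = s⁻¹ := by rw [inv_pow, Real.sq_sqrt hs0]
    rw [← div_le_iff₀ hpos]
    apply le_csSup (bddAbove_rayleigh n W)
    -- The unit vector witnessing membership is `y / ‖y‖`.
    refine ⟨fun i => (Real.sqrt s)⁻¹ * y i, ?_, ?_, ?_⟩
    · simp only [mul_pow, hsq]
      rw [← Finset.mul_sum, ← hs, inv_mul_cancel₀ hpos.ne']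
    · rw [← Finset.mul_sum, hy, mul_zero]
    · simp only [mul_left_comm _ (Real.sqrt s)⁻¹, ← Finset.mul_sum, mul_pow, hsq]
      rw [div_eq_inv_mul]

lemma avgMat_mul (n : ℕ) (W : Matrix (Fin n) (Fin n) ℝ) (hcol : ∀ j, ∑ i, W i j = 1) :
    avgMat n * W = avgMat n := by
  ext i j
  simp only [Matrix.mul_apply, avgMat, Matrix.of_apply, ← Finset.mul_sum, hcol, mul_one]

lemma row_sum_mul_one_sub_avgMat (n d : ℕ) (hn : 2 ≤ n) (X : Matrix (Fin d) (Fin n) ℝ)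
    (k : Fin d) : ∑ i, (X * ((1 : Matrix (Fin n) (Fin n) ℝ) - avgMat n)) k i = 0 := by
  have hn0 : (n : ℝ) ≠ 0 := by positivity
  simp only [Matrix.mul_sub, Matrix.mul_one, Matrix.sub_apply, Finset.sum_sub_distrib]
  simp only [Matrix.mul_apply, avgMat, Matrix.of_apply, ← Finset.sum_mul, Finset.sum_const,
    Finset.card_univ, Fintype.card_fin, nsmul_eq_mul]
  field_simp
  ring

/-- for a doubly stochastic W and
λ = max{‖Wᵀx‖₂² : ‖x‖₂ = 1, Σᵢ xᵢ = 0}, one has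
‖X(W − Π)‖_F² ≤ λ‖X(I − Π)‖_F². -/
theorem spectral_contraction (n d : ℕ) (hn : 2 ≤ n)
    (W : Matrix (Fin n) (Fin n) ℝ)
    (hnn : ∀ i j, 0 ≤ W i j)
    (hrow : ∀ i, ∑ j, W i j = 1)
    (hcol : ∀ j, ∑ i, W i j = 1)
    (X : Matrix (Fin d) (Fin n) ℝ) :
    frobSq (X * (W - avgMat n)) ≤
      (sSup {r : ℝ | ∃ x : Fin n → ℝ,
          (∑ i, (x i) ^ 2 = 1) ∧ (∑ i, x i = 0) ∧
          r = ∑ i, (∑ j, W j i * x j) ^ 2}) *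
        frobSq (X * ((1 : Matrix (Fin n) (Fin n) ℝ) - avgMat n)) := by
  have hfac : X * (W - avgMat n) = X * ((1 : Matrix (Fin n) (Fin n) ℝ) - avgMat n) * W := by
    rw [Matrix.mul_assoc, Matrix.sub_mul, Matrix.one_mul, avgMat_mul n W hcol]
  have hsum := row_sum_mul_one_sub_avgMat n d hn X
  rw [hfac]
  generalize X * ((1 : Matrix (Fin n) (Fin n) ℝ) - avgMat n) = Y at hsum
  unfold frobSq
  rw [Finset.mul_sum]
  refine Finset.sum_le_sum fun k _ => ?_
  have h := sum_sq_le_lambda_mul n W (Y k) (hsum k)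
  simpa only [Matrix.mul_apply, mul_comm (Y k _)] using h
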